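/- The transformed function solves the Hardy-weight equation: let U ⊆ Ω be open and let G ∈ C¹(U) be a positive weakly (p,A)-harmonic function in U. Set v := G^{(p−1)/p} and W := ((p−1)/p)^p (|∇G|_A / G)^p. Then v is a positive weak solution of −Δ_{p,A} v = W v^{p−1} in U, i.e. ∫_U |∇v|_A^{p−2}⟨A∇v,∇ψ⟩ dx = ∫_U W v^{p−1} ψ dx for every ψ ∈ C_c^∞(U). -/

import Mathlib

/-!
Write `q = (p - 1) / p` and `v = G ^ q`. Since `∇v = q G^{q-1} ∇G` and `(q - 1)(p - 1) = -q`, the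
flux of `v` is `|∇v|_A^{p-2} A∇v = q^{p-1} G^{-q} |∇G|_A^{p-2} A∇G`. Testing the equation of `G`
with `φ = G^{-q} ψ`, for which `∇φ = G^{-q} ∇ψ - q ψ G^{-q-1} ∇G`, gives
`∫ ⟨|∇v|_A^{p-2} A∇v, ∇ψ⟩ = q^p ∫ G^{-q-1} |∇G|_A^p ψ`, and the right-hand side is `∫ W v^{p-1} ψ`
because `-q - 1 = q (p - 1) - p`.

The function `φ` is only `C¹`, so the class of test functions has to be enlarged
(`IsPAHarmonic.integral_eq_zero`): mollification approximates `φ` with uniformly close gradients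
and supports in one compact subset of `U` (`exists_testFun_approx`), and the flux of `G` is bounded
on compact sets by local ellipticity (`exists_flux_bound`).
-/

open MeasureTheory Set Filter Topology

noncomputable section

variable {n : ℕ}

/-- The `A`-inner product `⟨A(x)ξ, η⟩`. -/
def aInner (A : EuclideanSpace ℝ (Fin n) → Matrix (Fin n) (Fin n) ℝ)
    (x ξ η : EuclideanSpace ℝ (Fin n)) : ℝ :=
  ∑ i, ∑ j, A x i j * ξ j * η i

/-- `|ξ|_A := ⟨A(x)ξ, ξ⟩^{1/2}`. -/
def aNorm (A : EuclideanSpace ℝ (Fin n) → Matrix (Fin n) (Fin n) ℝ)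
    (x ξ : EuclideanSpace ℝ (Fin n)) : ℝ :=
  Real.sqrt (aInner A x ξ ξ)

/-- Assumptions on the matrix field `A`: symmetric, positive definite, locally Hölder
continuous, and locally uniformly elliptic on `Ω`. -/
structure IsEllipticMatrix (Ω : Set (EuclideanSpace ℝ (Fin n)))
    (A : EuclideanSpace ℝ (Fin n) → Matrix (Fin n) (Fin n) ℝ) : Prop where
  symm : ∀ x ∈ Ω, (A x).IsSymm
  posdef : ∀ x ∈ Ω, ∀ ξ : EuclideanSpace ℝ (Fin n), ξ ≠ 0 → 0 < aInner A x ξ ξ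
  locHolder : ∀ K ⊆ Ω, IsCompact K → ∃ C > (0:ℝ), ∃ α ∈ Set.Ioc (0:ℝ) 1,
      ∀ x ∈ K, ∀ y ∈ K, ∀ i j, |A x i j - A y i j| ≤ C * dist x y ^ α
  elliptic : ∀ K ⊆ Ω, IsCompact K → ∃ Θ > (0:ℝ), ∀ x ∈ K, ∀ ξ : EuclideanSpace ℝ (Fin n),
      Θ⁻¹ * ‖ξ‖ ^ 2 ≤ aInner A x ξ ξ ∧ aInner A x ξ ξ ≤ Θ * ‖ξ‖ ^ 2

/-- Test functions: `C_c^∞` functions with support in `U`. -/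
def IsTestFun (U : Set (EuclideanSpace ℝ (Fin n))) (ψ : EuclideanSpace ℝ (Fin n) → ℝ) : Prop :=
  ContDiff ℝ (⊤ : ℕ∞) ψ ∧ HasCompactSupport ψ ∧ tsupport ψ ⊆ U

/-- Weakly `(p,A)`-harmonic in `U`. -/
def IsPAHarmonic (A : EuclideanSpace ℝ (Fin n) → Matrix (Fin n) (Fin n) ℝ) (p : ℝ)
    (U : Set (EuclideanSpace ℝ (Fin n))) (G : EuclideanSpace ℝ (Fin n) → ℝ) : Prop :=
  ∀ ψ, IsTestFun U ψ →
    ∫ x in U, (aNorm A x (gradient G x)) ^ (p - 2) *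
      aInner A x (gradient G x) (gradient ψ x) = 0

/-- Weak solution of `Q_{p,A,V}(u) = g` in `U` (for positive `u`). -/
def IsWeakSolution (A : EuclideanSpace ℝ (Fin n) → Matrix (Fin n) (Fin n) ℝ) (p : ℝ)
    (V g : EuclideanSpace ℝ (Fin n) → ℝ) (U : Set (EuclideanSpace ℝ (Fin n)))
    (u : EuclideanSpace ℝ (Fin n) → ℝ) : Prop :=
  ∀ ψ, IsTestFun U ψ →
    (∫ x in U, (aNorm A x (gradient u x)) ^ (p - 2) *
        aInner A x (gradient u x) (gradient ψ x))
      + (∫ x in U, V x * u x ^ (p - 1) * ψ x)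
      = ∫ x in U, g x * ψ x

/-- Weak supersolution of `Q_{p,A,V}(u) = 0` in `U` (for positive `u`). -/
def IsWeakSupersolution (A : EuclideanSpace ℝ (Fin n) → Matrix (Fin n) (Fin n) ℝ) (p : ℝ)
    (V : EuclideanSpace ℝ (Fin n) → ℝ) (U : Set (EuclideanSpace ℝ (Fin n)))
    (u : EuclideanSpace ℝ (Fin n) → ℝ) : Prop :=
  ∀ ψ, IsTestFun U ψ → (∀ x, 0 ≤ ψ x) →
    0 ≤ (∫ x in U, (aNorm A x (gradient u x)) ^ (p - 2) *
        aInner A x (gradient u x) (gradient ψ x))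
      + (∫ x in U, V x * u x ^ (p - 1) * ψ x)

/-- `Q_{p,A,V}` is subcritical in `Ω`. -/
def IsSubcritical (A : EuclideanSpace ℝ (Fin n) → Matrix (Fin n) (Fin n) ℝ) (p : ℝ)
    (V : EuclideanSpace ℝ (Fin n) → ℝ) (Ω : Set (EuclideanSpace ℝ (Fin n))) : Prop :=
  ∃ W₀ : EuclideanSpace ℝ (Fin n) → ℝ, ContinuousOn W₀ Ω ∧ (∀ x ∈ Ω, 0 ≤ W₀ x) ∧
    (∃ x ∈ Ω, W₀ x ≠ 0) ∧
    ∀ ψ, IsTestFun Ω ψ →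
      0 ≤ ∫ x in Ω, ((aNorm A x (gradient ψ x)) ^ p + (V x - W₀ x) * |ψ x| ^ p)

/-- A null-sequence for `Q_{p,A,V}` in `U`. -/
def IsNullSequence (A : EuclideanSpace ℝ (Fin n) → Matrix (Fin n) (Fin n) ℝ) (p : ℝ)
    (V : EuclideanSpace ℝ (Fin n) → ℝ) (U : Set (EuclideanSpace ℝ (Fin n)))
    (u : ℕ → EuclideanSpace ℝ (Fin n) → ℝ) : Prop :=
  (∀ k, IsTestFun U (u k)) ∧ (∀ k x, 0 ≤ u k x) ∧
  (∃ B : Set (EuclideanSpace ℝ (Fin n)), IsOpen B ∧ B.Nonempty ∧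
      IsCompact (closure B) ∧ closure B ⊆ U ∧
      ∃ c > (0:ℝ), ∀ k, c ≤ (∫ x in B, u k x ^ p) ∧ (∫ x in B, u k x ^ p) ≤ c⁻¹) ∧
  Tendsto (fun k => ∫ x in U,
      ((aNorm A x (gradient (u k) x)) ^ p + V x * |u k x| ^ p)) atTop (𝓝 0)

/-- `V` lies in the local Morrey space `M^q_loc(p;Ω)`. -/
def InMorreyLoc (p : ℝ) (Ω : Set (EuclideanSpace ℝ (Fin n)))
    (V : EuclideanSpace ℝ (Fin n) → ℝ) : Prop :=
  if p < n then
    ∃ q : ℝ, q > (n : ℝ) / p ∧ ∀ ω : Set (EuclideanSpace ℝ (Fin n)),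
      IsOpen ω → IsCompact (closure ω) → closure ω ⊆ Ω →
      ∃ M : ℝ, ∀ y ∈ ω, ∀ r ∈ Set.Ioo (0:ℝ) (Metric.diam ω),
        r ^ ((n : ℝ) / q - n) * (∫ x in ω ∩ Metric.ball y r, |V x|) ≤ M
  else if (n : ℝ) < p then
    MeasureTheory.LocallyIntegrableOn V Ω
  else
    ∃ q : ℝ, q > (n : ℝ) ∧ ∀ ω : Set (EuclideanSpace ℝ (Fin n)),
      IsOpen ω → IsCompact (closure ω) → closure ω ⊆ Ω →
      ∃ M : ℝ, ∀ y ∈ ω, ∀ r ∈ Set.Ioo (0:ℝ) (Metric.diam ω),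
        (Real.log (Metric.diam ω / r)) ^ (q * ((n : ℝ) - 1) / n) *
          (∫ x in ω ∩ Metric.ball y r, |V x|) ≤ M

/-- `G ∈ C^{1,α}(U)`: continuously differentiable with locally `α`-Hölder gradient. -/
def IsC1Holder (α : ℝ) (U : Set (EuclideanSpace ℝ (Fin n)))
    (G : EuclideanSpace ℝ (Fin n) → ℝ) : Prop :=
  ContDiffOn ℝ 1 G U ∧ ∀ K ⊆ U, IsCompact K → ∃ C : ℝ,
    ∀ x ∈ K, ∀ y ∈ K, ‖gradient G x - gradient G y‖ ≤ C * dist x y ^ α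

/-- `G → 0` at infinity in `Ω` (where `G` is considered on `U ⊆ Ω`). -/
def TendstoZeroAtInfinityIn (Ω U : Set (EuclideanSpace ℝ (Fin n)))
    (G : EuclideanSpace ℝ (Fin n) → ℝ) : Prop :=
  ∀ ε > (0:ℝ), ∃ K ⊆ Ω, IsCompact K ∧ ∀ x ∈ U \ K, G x < ε

open scoped Classical in
/-- Flux integral `∫_S |∇G|_A^p / |∇G| dH^{n-1}`, with integrand `0` where `∇G = 0`. -/
def fluxIntegral (A : EuclideanSpace ℝ (Fin n) → Matrix (Fin n) (Fin n) ℝ) (p : ℝ)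
    (G : EuclideanSpace ℝ (Fin n) → ℝ) (S : Set (EuclideanSpace ℝ (Fin n))) : ℝ :=
  ∫ x in S, (if gradient G x = 0 then 0
    else (aNorm A x (gradient G x)) ^ p / ‖gradient G x‖) ∂(μH[(n : ℝ) - 1])

end

/-! ### Algebra of the `A`-inner product -/

lemma aInner_smul_left {n : ℕ} (A : EuclideanSpace ℝ (Fin n) → Matrix (Fin n) (Fin n) ℝ)
    (x ξ η : EuclideanSpace ℝ (Fin n)) (c : ℝ) : aInner A x (c • ξ) η = c * aInner A x ξ η := by
  simp only [aInner, Finset.mul_sum, PiLp.smul_apply, smul_eq_mul]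
  refine Finset.sum_congr rfl fun i _ => Finset.sum_congr rfl fun j _ => by ring

lemma aInner_smul_right {n : ℕ} (A : EuclideanSpace ℝ (Fin n) → Matrix (Fin n) (Fin n) ℝ)
    (x ξ η : EuclideanSpace ℝ (Fin n)) (c : ℝ) : aInner A x ξ (c • η) = c * aInner A x ξ η := by
  simp only [aInner, Finset.mul_sum, PiLp.smul_apply, smul_eq_mul]
  refine Finset.sum_congr rfl fun i _ => Finset.sum_congr rfl fun j _ => by ring

lemma aInner_add_right {n : ℕ} (A : EuclideanSpace ℝ (Fin n) → Matrix (Fin n) (Fin n) ℝ)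
    (x ξ η ζ : EuclideanSpace ℝ (Fin n)) :
    aInner A x ξ (η + ζ) = aInner A x ξ η + aInner A x ξ ζ := by
  simp only [aInner, ← Finset.sum_add_distrib, PiLp.add_apply]
  refine Finset.sum_congr rfl fun i _ => Finset.sum_congr rfl fun j _ => by ring

lemma aNorm_smul {n : ℕ} (A : EuclideanSpace ℝ (Fin n) → Matrix (Fin n) (Fin n) ℝ)
    (x ξ : EuclideanSpace ℝ (Fin n)) {c : ℝ} (hc : 0 ≤ c) :
    aNorm A x (c • ξ) = c * aNorm A x ξ := by
  rw [aNorm, aInner_smul_left, aInner_smul_right, ← mul_assoc, Real.sqrt_mul (by positivity),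
    Real.sqrt_mul_self hc, aNorm]

lemma abs_aInner_le {n : ℕ} (A : EuclideanSpace ℝ (Fin n) → Matrix (Fin n) (Fin n) ℝ)
    (x ξ η : EuclideanSpace ℝ (Fin n)) {M : ℝ} (hM : ∀ i j, |A x i j| ≤ M) :
    |aInner A x ξ η| ≤ n * (n * (M * ‖ξ‖ * ‖η‖)) := by
  have key : ∀ i j, |A x i j * ξ j * η i| ≤ M * ‖ξ‖ * ‖η‖ := by
    intro i j
    have h1 : |ξ j| ≤ ‖ξ‖ := PiLp.norm_apply_le ξ j
    have h2 : |η i| ≤ ‖η‖ := PiLp.norm_apply_le η i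
    have hM0 : 0 ≤ M := (abs_nonneg _).trans (hM i j)
    rw [abs_mul, abs_mul]
    have := hM i j
    gcongr
  calc |aInner A x ξ η| ≤ ∑ i : Fin n, ∑ j : Fin n, |A x i j * ξ j * η i| :=
        (Finset.abs_sum_le_sum_abs _ _).trans
          (Finset.sum_le_sum fun i _ => Finset.abs_sum_le_sum_abs _ _)
    _ ≤ ∑ i : Fin n, ∑ j : Fin n, M * ‖ξ‖ * ‖η‖ :=
        Finset.sum_le_sum fun i _ => Finset.sum_le_sum fun j _ => key i j
    _ = _ := by simp

/-! ### The flux `|∇G|_A^{p-2} A∇G` is locally bounded and measurable -/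

lemma IsEllipticMatrix.continuousOn_entry {n : ℕ} {Ω : Set (EuclideanSpace ℝ (Fin n))}
    {A : EuclideanSpace ℝ (Fin n) → Matrix (Fin n) (Fin n) ℝ}
    (hA : IsEllipticMatrix Ω A) (hΩ : IsOpen Ω) (i j : Fin n) :
    ContinuousOn (fun x => A x i j) Ω := by
  intro x hx
  apply ContinuousAt.continuousWithinAt
  obtain ⟨r, hr, hrΩ⟩ := Metric.nhds_basis_closedBall.mem_iff.1 (hΩ.mem_nhds hx)
  obtain ⟨C, hC, α, hα, h⟩ := hA.locHolder _ hrΩ (isCompact_closedBall x r)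
  rw [ContinuousAt, tendsto_iff_dist_tendsto_zero]
  have hlim : Tendsto (fun y => C * dist y x ^ α) (𝓝 x) (𝓝 0) := by
    have hc : ContinuousAt (fun y => C * dist y x ^ α) x := by
      refine continuousAt_const.mul (ContinuousAt.rpow_const ?_ (Or.inr hα.1.le))
      fun_prop
    have h0 := hc.tendsto
    rwa [dist_self, Real.zero_rpow hα.1.ne', mul_zero] at h0
  refine squeeze_zero' (Eventually.of_forall fun _ => dist_nonneg) ?_ hlim
  filter_upwards [Metric.closedBall_mem_nhds x hr] with y hy
  exact h y hy x (Metric.mem_closedBall_self hr.le) i j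

lemma continuousOn_gradient {n : ℕ} {U : Set (EuclideanSpace ℝ (Fin n))} (hU : IsOpen U)
    {G : EuclideanSpace ℝ (Fin n) → ℝ} (hG : ContDiffOn ℝ 1 G U) :
    ContinuousOn (gradient G) U :=
  (InnerProductSpace.toDual ℝ _).symm.continuous.comp_continuousOn
    (hG.continuousOn_fderiv_of_isOpen hU le_rfl)

/-- On a compact set the flux `|∇G|_A^{p-2} A∇G` is bounded, even for `p < 2`: by ellipticity
it is of order `|∇G|_A^{p-1}`. -/
lemma exists_flux_bound {n : ℕ} {Ω : Set (EuclideanSpace ℝ (Fin n))} (hΩ : IsOpen Ω)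
    {p : ℝ} (hp : 1 < p) {A : EuclideanSpace ℝ (Fin n) → Matrix (Fin n) (Fin n) ℝ}
    (hA : IsEllipticMatrix Ω A) {U : Set (EuclideanSpace ℝ (Fin n))} (hU : IsOpen U)
    (hUΩ : U ⊆ Ω) {G : EuclideanSpace ℝ (Fin n) → ℝ} (hG : ContDiffOn ℝ 1 G U)
    {K : Set (EuclideanSpace ℝ (Fin n))} (hK : IsCompact K) (hKU : K ⊆ U) :
    ∃ C, 0 ≤ C ∧ ∀ x ∈ K, ∀ η : EuclideanSpace ℝ (Fin n),
      |aNorm A x (gradient G x) ^ (p - 2) * aInner A x (gradient G x) η| ≤ C * ‖η‖ := by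
  obtain ⟨N, hN⟩ := hK.exists_bound_of_continuousOn ((continuousOn_gradient hU hG).mono hKU)
  have hM : ∃ M, ∀ x ∈ K, ∀ i j, |A x i j| ≤ M := by
    have hc : ContinuousOn (fun x => ∑ i, ∑ j, |A x i j|) K :=
      continuousOn_finsetSum _ fun i _ => continuousOn_finsetSum _ fun j _ =>
        ((hA.continuousOn_entry hΩ i j).mono (hKU.trans hUΩ)).abs
    obtain ⟨M, hM⟩ := hK.exists_bound_of_continuousOn hc
    refine ⟨M, fun x hx i j => le_trans ?_ ((le_abs_self _).trans (hM x hx))⟩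
    calc |A x i j| ≤ ∑ j, |A x i j| :=
          Finset.single_le_sum (f := fun j => |A x i j|) (fun _ _ => abs_nonneg _)
            (Finset.mem_univ j)
      _ ≤ _ := Finset.single_le_sum (f := fun i => ∑ j, |A x i j|)
            (fun _ _ => Finset.sum_nonneg fun _ _ => abs_nonneg _) (Finset.mem_univ i)
  obtain ⟨M', hM'⟩ := hM
  obtain ⟨M, hM0, hM⟩ : ∃ M, 0 ≤ M ∧ ∀ x ∈ K, ∀ i j, |A x i j| ≤ M :=
    ⟨max M' 0, le_max_right _ _, fun x hx i j => (hM' x hx i j).trans (le_max_left _ _)⟩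
  obtain ⟨Θ, hΘ, hell⟩ := hA.elliptic K (hKU.trans hUΩ) hK
  refine ⟨n * (n * (M * √Θ)) * (√Θ * |N|) ^ (p - 1), by positivity, fun x hx η => ?_⟩
  set ξ := gradient G x with hξ
  by_cases h0 : ξ = 0
  · have : aInner A x ξ η = 0 := by simp [h0, aInner]
    rw [this, mul_zero, abs_zero]
    positivity
  have hpos : 0 < aInner A x ξ ξ := hA.posdef x (hUΩ (hKU hx)) ξ h0
  have hs : 0 < aNorm A x ξ := Real.sqrt_pos.2 hpos
  have hsq : aNorm A x ξ ^ 2 = aInner A x ξ ξ := Real.sq_sqrt hpos.le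
  have hΘs : √Θ ^ 2 = Θ := Real.sq_sqrt hΘ.le
  obtain ⟨hl, hr⟩ := hell x hx ξ
  have h1 : ‖ξ‖ ≤ √Θ * aNorm A x ξ := by
    refine abs_le_of_sq_le_sq' ?_ (by positivity) |>.2
    rw [mul_pow, hΘs, hsq]
    rwa [inv_mul_le_iff₀ hΘ] at hl
  have h2 : aNorm A x ξ ≤ √Θ * |N| := by
    have : aNorm A x ξ ≤ √Θ * ‖ξ‖ := by
      refine abs_le_of_sq_le_sq' ?_ (by positivity) |>.2
      rw [mul_pow, hΘs, hsq]
      exact hr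
    refine this.trans ?_
    have := (hN x hx).trans (le_abs_self N)
    gcongr
  calc |aNorm A x ξ ^ (p - 2) * aInner A x ξ η|
      = aNorm A x ξ ^ (p - 2) * |aInner A x ξ η| := by
        rw [abs_mul, abs_of_nonneg (by positivity)]
    _ ≤ aNorm A x ξ ^ (p - 2) * (n * (n * (M * (√Θ * aNorm A x ξ) * ‖η‖))) := by
        refine mul_le_mul_of_nonneg_left ((abs_aInner_le A x ξ η (hM x hx)).trans ?_)
          (by positivity)
        gcongr
    _ = n * (n * (M * √Θ)) * (aNorm A x ξ ^ (p - 2) * aNorm A x ξ) * ‖η‖ := by ring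
    _ = n * (n * (M * √Θ)) * aNorm A x ξ ^ (p - 1) * ‖η‖ := by
        rw [← Real.rpow_add_one hs.ne']
        ring_nf
    _ ≤ _ := by
        have : aNorm A x ξ ^ (p - 1) ≤ (√Θ * |N|) ^ (p - 1) :=
          Real.rpow_le_rpow hs.le h2 (by linarith)
        gcongr

lemma aestronglyMeasurable_flux {n : ℕ} {Ω : Set (EuclideanSpace ℝ (Fin n))} (hΩ : IsOpen Ω)
    (p : ℝ) {A : EuclideanSpace ℝ (Fin n) → Matrix (Fin n) (Fin n) ℝ}
    (hA : IsEllipticMatrix Ω A) {U : Set (EuclideanSpace ℝ (Fin n))} (hU : IsOpen U)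
    (hUΩ : U ⊆ Ω) {G : EuclideanSpace ℝ (Fin n) → ℝ} (hG : ContDiffOn ℝ 1 G U)
    {H : EuclideanSpace ℝ (Fin n) → EuclideanSpace ℝ (Fin n)} (hH : ContinuousOn H U) :
    AEStronglyMeasurable (fun x => aNorm A x (gradient G x) ^ (p - 2) *
      aInner A x (gradient G x) (H x)) (volume.restrict U) := by
  have hg := continuousOn_gradient hU hG
  have hcoord : ∀ {F : EuclideanSpace ℝ (Fin n) → EuclideanSpace ℝ (Fin n)},
      ContinuousOn F U → ∀ i, ContinuousOn (fun x => F x i) U := fun hF i =>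
    (EuclideanSpace.proj (𝕜 := ℝ) i).continuous.comp_continuousOn hF
  have hin : ∀ {F : EuclideanSpace ℝ (Fin n) → EuclideanSpace ℝ (Fin n)},
      ContinuousOn F U → ContinuousOn (fun x => aInner A x (gradient G x) (F x)) U := fun hF =>
    continuousOn_finsetSum _ fun i _ => continuousOn_finsetSum _ fun j _ =>
      (((hA.continuousOn_entry hΩ i j).mono hUΩ).mul (hcoord hg j)).mul (hcoord hF i)
  have h1 : AEMeasurable (fun x => aNorm A x (gradient G x)) (volume.restrict U) :=
    (hin hg).sqrt.aemeasurable hU.measurableSet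
  exact ((h1.pow_const (p - 2)).mul ((hin hH).aemeasurable hU.measurableSet)).aestronglyMeasurable

/-- The flux pairs integrably with every continuous field supported in a compact part of `U`. -/
lemma integrableOn_flux {n : ℕ} {Ω : Set (EuclideanSpace ℝ (Fin n))} (hΩ : IsOpen Ω)
    {p : ℝ} (hp : 1 < p) {A : EuclideanSpace ℝ (Fin n) → Matrix (Fin n) (Fin n) ℝ}
    (hA : IsEllipticMatrix Ω A) {U : Set (EuclideanSpace ℝ (Fin n))} (hU : IsOpen U)
    (hUΩ : U ⊆ Ω) {G : EuclideanSpace ℝ (Fin n) → ℝ} (hG : ContDiffOn ℝ 1 G U)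
    {K : Set (EuclideanSpace ℝ (Fin n))} (hK : IsCompact K) (hKU : K ⊆ U)
    {H : EuclideanSpace ℝ (Fin n) → EuclideanSpace ℝ (Fin n)} (hH : ContinuousOn H U)
    (hHK : ∀ x ∉ K, H x = 0) :
    IntegrableOn (fun x => aNorm A x (gradient G x) ^ (p - 2) *
      aInner A x (gradient G x) (H x)) U := by
  obtain ⟨C, hC0, hC⟩ := exists_flux_bound hΩ hp hA hU hUΩ hG hK hKU
  obtain ⟨B, hB⟩ := hK.exists_bound_of_continuousOn (hH.mono hKU)
  have hKint : IntegrableOn (fun x => aNorm A x (gradient G x) ^ (p - 2) *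
      aInner A x (gradient G x) (H x)) K := by
    refine IntegrableOn.of_bound hK.measure_lt_top
      ((aestronglyMeasurable_flux hΩ p hA hU hUΩ hG hH).mono_set hKU) (C * B) ?_
    filter_upwards [ae_restrict_mem hK.measurableSet] with x hx
    exact (hC x hx (H x)).trans (mul_le_mul_of_nonneg_left (hB x hx) hC0)
  refine hKint.of_forall_sdiff_eq_zero hU.measurableSet fun x hx => ?_
  simp [hHK x hx.2, aInner]

/-! ### From smooth to `C¹` test functions -/

lemma gradient_eq_zero_of_notMem_tsupport {n : ℕ} {φ : EuclideanSpace ℝ (Fin n) → ℝ}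
    {x : EuclideanSpace ℝ (Fin n)} (hx : x ∉ tsupport φ) : gradient φ x = 0 := by
  have : fderiv ℝ φ x = 0 := by
    by_contra h
    exact hx (support_fderiv_subset ℝ h)
  rw [gradient, this, map_zero]

/-- Mollification: the gradient of a `C¹` function with compact support in `U` is a uniform limit of
gradients of test functions that are all supported in one fixed compact subset of `U`. -/
lemma exists_testFun_approx {n : ℕ} {U : Set (EuclideanSpace ℝ (Fin n))} (hU : IsOpen U)
    {φ : EuclideanSpace ℝ (Fin n) → ℝ} (hφ : ContDiff ℝ 1 φ) (hφc : HasCompactSupport φ)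
    (hφU : tsupport φ ⊆ U) :
    ∃ K, IsCompact K ∧ K ⊆ U ∧ tsupport φ ⊆ K ∧ ∀ ε > 0, ∃ φ', IsTestFun U φ' ∧
      tsupport φ' ⊆ K ∧ ∀ x, ‖gradient φ x - gradient φ' x‖ ≤ ε := by
  obtain ⟨δ, hδ, hδU⟩ := hφc.isCompact.exists_cthickening_subset_open hU hφU
  have hKc : IsCompact (Metric.cthickening δ (tsupport φ)) := hφc.isCompact.cthickening
  refine ⟨_, hKc, hδU, Metric.self_subset_cthickening _, fun ε hε => ?_⟩
  have hcont : Continuous (fderiv ℝ φ) := hφ.continuous_fderiv one_ne_zero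
  have huc : UniformContinuous (fderiv ℝ φ) :=
    (hφc.fderiv ℝ).uniformContinuous_of_continuous hcont
  obtain ⟨η, hη, hηε⟩ := Metric.uniformContinuous_iff.1 huc ε hε
  set r := min δ η with hr
  have hr0 : 0 < r := lt_min hδ hη
  let ρ : ContDiffBump (0 : EuclideanSpace ℝ (Fin n)) := ⟨r / 2, r, half_pos hr0, half_lt_self hr0⟩
  let φ' : EuclideanSpace ℝ (Fin n) → ℝ :=
    convolution (ρ.normed volume) φ (ContinuousLinearMap.lsmul ℝ ℝ) volume
  have hsupp : tsupport φ' ⊆ Metric.cthickening δ (tsupport φ) := by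
    refine closure_minimal ?_ Metric.isClosed_cthickening
    refine (support_convolution_subset_swap _).trans ?_
    rintro _ ⟨a, ha, b, hb, rfl⟩
    rw [ρ.support_normed_eq] at hb
    refine Metric.mem_cthickening_of_dist_le _ a _ _ (subset_tsupport _ ha) ?_
    have hb' : ‖b‖ < r := by simpa using hb
    simpa using hb'.le.trans (min_le_left _ _)
  refine ⟨φ', ⟨?_, hKc.of_isClosed_subset (isClosed_tsupport _) hsupp, hsupp.trans hδU⟩, hsupp,
    fun x => ?_⟩
  · exact ρ.hasCompactSupport_normed.contDiff_convolution_left _ ρ.contDiff_normed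
      hφ.continuous.locallyIntegrable
  · have hd := hφc.hasFDerivAt_convolution_right (μ := volume) (ContinuousLinearMap.lsmul ℝ ℝ)
      (ρ.continuous_normed (μ := volume)).locallyIntegrable hφ x
    have hpre : convolution (ρ.normed volume) (fderiv ℝ φ)
        ((ContinuousLinearMap.lsmul ℝ ℝ : ℝ →L[ℝ] ℝ →L[ℝ] ℝ).precompR
          (EuclideanSpace ℝ (Fin n))) volume x
        = convolution (ρ.normed volume) (fderiv ℝ φ) (ContinuousLinearMap.lsmul ℝ ℝ) volume x := by
      simp only [convolution_def]
      congr 1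
    rw [hpre] at hd
    have hle := ρ.dist_normed_convolution_le (μ := volume) (x₀ := x) (ε := ε)
      hcont.aestronglyMeasurable fun y hy =>
        (hηε (lt_of_lt_of_le (Metric.mem_ball.1 hy) (min_le_right _ _))).le
    rw [gradient, gradient, ← map_sub, LinearIsometryEquiv.norm_map, hd.fderiv, ← dist_eq_norm,
      dist_comm]
    exact hle

/-- A weakly `(p,A)`-harmonic `C¹` function may be tested against compactly supported `C¹`
functions. -/
lemma IsPAHarmonic.integral_eq_zero {n : ℕ} {Ω : Set (EuclideanSpace ℝ (Fin n))} (hΩ : IsOpen Ω)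
    {p : ℝ} (hp : 1 < p) {A : EuclideanSpace ℝ (Fin n) → Matrix (Fin n) (Fin n) ℝ}
    (hA : IsEllipticMatrix Ω A) {U : Set (EuclideanSpace ℝ (Fin n))} (hU : IsOpen U)
    (hUΩ : U ⊆ Ω) {G : EuclideanSpace ℝ (Fin n) → ℝ} (hG : ContDiffOn ℝ 1 G U)
    (hharm : IsPAHarmonic A p U G)
    {φ : EuclideanSpace ℝ (Fin n) → ℝ} (hφ : ContDiff ℝ 1 φ) (hφc : HasCompactSupport φ)
    (hφU : tsupport φ ⊆ U) :
    ∫ x in U, aNorm A x (gradient G x) ^ (p - 2) *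
      aInner A x (gradient G x) (gradient φ x) = 0 := by
  obtain ⟨K, hK, hKU, hφK, happ⟩ := exists_testFun_approx hU hφ hφc hφU
  obtain ⟨C, hC0, hC⟩ := exists_flux_bound hΩ hp hA hU hUΩ hG hK hKU
  have hbound : ∀ ε > 0, |∫ x in U, aNorm A x (gradient G x) ^ (p - 2) *
      aInner A x (gradient G x) (gradient φ x)| ≤ C * ε * volume.real K := by
    intro ε hε
    obtain ⟨φ', hφ', hφ'K, hε'⟩ := happ ε hε
    have hφ'1 : ContDiff ℝ 1 φ' := hφ'.1.of_le (by exact_mod_cast le_top)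
    have hgφ := continuousOn_gradient hU hφ.contDiffOn
    have hgφ' := continuousOn_gradient hU hφ'1.contDiffOn
    have hz : ∀ x ∉ K, gradient φ x = 0 := fun x hx =>
      gradient_eq_zero_of_notMem_tsupport fun h => hx (hφK h)
    have hz' : ∀ x ∉ K, gradient φ' x = 0 := fun x hx =>
      gradient_eq_zero_of_notMem_tsupport fun h => hx (hφ'K h)
    have hsplit : ∫ x in U, aNorm A x (gradient G x) ^ (p - 2) *
          aInner A x (gradient G x) (gradient φ x)
        = ∫ x in U, aNorm A x (gradient G x) ^ (p - 2) *
          aInner A x (gradient G x) (gradient φ x - gradient φ' x) := by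
      have i1 := integrableOn_flux hΩ hp hA hU hUΩ hG hK hKU (hgφ.sub hgφ')
        (fun x hx => by simp [hz x hx, hz' x hx])
      have i2 := integrableOn_flux hΩ hp hA hU hUΩ hG hK hKU hgφ' hz'
      have hadd := integral_add i1 i2
      rw [hharm φ' hφ', add_zero] at hadd
      refine Eq.trans ?_ hadd
      congr 1
      funext x
      simp only [Pi.sub_apply]
      rw [← mul_add, ← aInner_add_right, sub_add_cancel]
    rw [hsplit, setIntegral_eq_of_subset_of_forall_sdiff_eq_zero hU.measurableSet hKU
      (fun x hx => by simp [hz x hx.2, hz' x hx.2, aInner])]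
    rw [← Real.norm_eq_abs]
    refine norm_setIntegral_le_of_norm_le_const (μ := volume) hK.measure_lt_top fun x hx => ?_
    exact (hC x hx _).trans (mul_le_mul_of_nonneg_left (hε' x) hC0)
  rw [← abs_eq_zero]
  refine le_antisymm ?_ (abs_nonneg _)
  have hlim : Tendsto (fun ε : ℝ => C * ε * volume.real K) (𝓝[>] 0) (𝓝 0) := by
    have hc : Continuous fun ε : ℝ => C * ε * volume.real K := by fun_prop
    simpa using (hc.tendsto 0).mono_left nhdsWithin_le_nhds
  exact ge_of_tendsto hlim (eventually_nhdsWithin_of_forall fun ε hε => hbound ε hε)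

/-! ### The test function `G^{-(p-1)/p} ψ` -/

lemma contDiff_rpow_mul {n : ℕ} {U : Set (EuclideanSpace ℝ (Fin n))} (hU : IsOpen U)
    {G ψ : EuclideanSpace ℝ (Fin n) → ℝ} (hG : ContDiffOn ℝ 1 G U) (hGpos : ∀ x ∈ U, 0 < G x)
    (hψ : ContDiff ℝ 1 ψ) (hψU : tsupport ψ ⊆ U) (s : ℝ) :
    ContDiff ℝ 1 (fun x => G x ^ s * ψ x) := by
  rw [contDiff_iff_contDiffAt]
  intro x
  by_cases hx : x ∈ tsupport ψ
  · have hxU := hψU hx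
    exact ((hG.contDiffAt (hU.mem_nhds hxU)).rpow_const_of_ne (hGpos x hxU).ne').mul
      hψ.contDiffAt
  · refine (contDiffAt_const (c := (0 : ℝ))).congr_of_eventuallyEq ?_
    filter_upwards [notMem_tsupport_iff_eventuallyEq.1 hx] with y hy
    simp [hy]

lemma gradient_rpow {n : ℕ} {G : EuclideanSpace ℝ (Fin n) → ℝ} {x : EuclideanSpace ℝ (Fin n)}
    (hG : DifferentiableAt ℝ G x) (h0 : G x ≠ 0) (s : ℝ) :
    gradient (fun y => G y ^ s) x = (s * G x ^ (s - 1)) • gradient G x := by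
  rw [gradient, (hG.hasFDerivAt.rpow_const (Or.inl h0)).fderiv, map_smul, gradient]

lemma gradient_rpow_mul {n : ℕ} {G ψ : EuclideanSpace ℝ (Fin n) → ℝ}
    {x : EuclideanSpace ℝ (Fin n)} (hG : DifferentiableAt ℝ G x) (h0 : G x ≠ 0)
    (hψ : DifferentiableAt ℝ ψ x) (s : ℝ) :
    gradient (fun y => G y ^ s * ψ y) x =
      G x ^ s • gradient ψ x + (ψ x * (s * G x ^ (s - 1))) • gradient G x := by
  have := ((hG.hasFDerivAt.rpow_const (p := s) (Or.inl h0)).mul hψ.hasFDerivAt).fderiv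
  rw [gradient, gradient, gradient, ← map_smul, ← map_smul, ← map_add, mul_smul, ← this]
  rfl

theorem transformed_function_solves_hardy_equation
    {n : ℕ} (hn : 2 ≤ n) (Ω : Set (EuclideanSpace ℝ (Fin n)))
    (hΩopen : IsOpen Ω) (hΩconn : IsConnected Ω)
    (p : ℝ) (hp : 1 < p)
    (A : EuclideanSpace ℝ (Fin n) → Matrix (Fin n) (Fin n) ℝ)
    (hA : IsEllipticMatrix Ω A)
    (U : Set (EuclideanSpace ℝ (Fin n))) (hU : IsOpen U) (hUΩ : U ⊆ Ω)
    (G : EuclideanSpace ℝ (Fin n) → ℝ)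
    (hG1 : ContDiffOn ℝ 1 G U)
    (hGpos : ∀ x ∈ U, 0 < G x)
    (hGharm : IsPAHarmonic A p U G) :
    (∀ x ∈ U, 0 < G x ^ ((p - 1) / p)) ∧
    ∀ ψ, IsTestFun U ψ →
      (∫ x in U, (aNorm A x (gradient (fun y => G y ^ ((p - 1) / p)) x)) ^ (p - 2) *
          aInner A x (gradient (fun y => G y ^ ((p - 1) / p)) x) (gradient ψ x))
        = ∫ x in U, (((p - 1) / p) ^ p * (aNorm A x (gradient G x) / G x) ^ p) *
            (G x ^ ((p - 1) / p)) ^ (p - 1) * ψ x := by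
  have hp0 : 0 < p := by linarith
  set q := (p - 1) / p with hq
  have hq0 : 0 < q := div_pos (by linarith) hp0
  have hqp : q * p = p - 1 := div_mul_cancel₀ _ hp0.ne'
  refine ⟨fun x hx => Real.rpow_pos_of_pos (hGpos x hx) _, fun ψ hψ => ?_⟩
  obtain ⟨hψs, hψc, hψU⟩ := hψ
  have hψ1 : ContDiff ℝ 1 ψ := hψs.of_le (by exact_mod_cast le_top)
  have hdG : ∀ x ∈ U, DifferentiableAt ℝ G x := fun x hx =>
    (hG1.contDiffAt (hU.mem_nhds hx)).differentiableAt one_ne_zero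
  have hφ := contDiff_rpow_mul hU hG1 hGpos hψ1 hψU (-q)
  have hφs : tsupport (fun x => G x ^ (-q) * ψ x) ⊆ tsupport ψ :=
    closure_mono fun x hx h => hx (by simp [h])
  have hφc : HasCompactSupport (fun x => G x ^ (-q) * ψ x) :=
    hψc.isCompact.of_isClosed_subset (isClosed_tsupport _) hφs
  have hzero := hGharm.integral_eq_zero hΩopen hp hA hU hUΩ hG1 hφ hφc (hφs.trans hψU)
  have hzψ : ∀ x ∉ tsupport ψ, gradient ψ x = 0 := fun x => gradient_eq_zero_of_notMem_tsupport
  have hgψ := continuousOn_gradient hU hψ1.contDiffOn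
  have hgφ := continuousOn_gradient hU hφ.contDiffOn
  have i1 := integrableOn_flux hΩopen hp hA hU hUΩ hG1 hψc.isCompact hψU
    (H := fun x => (q ^ (p - 1) * G x ^ (-q)) • gradient ψ x)
    ((continuousOn_const.mul (hG1.continuousOn.rpow_const
      fun x hx => Or.inl (hGpos x hx).ne')).smul hgψ) (fun x hx => by simp [hzψ x hx])
  have i2 := (integrableOn_flux hΩopen hp hA hU hUΩ hG1 hψc.isCompact hψU hgφ
    (fun x hx => gradient_eq_zero_of_notMem_tsupport fun h => hx (hφs h))).const_mul (q ^ (p - 1))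
  have hsub := integral_sub i1 i2
  rw [integral_const_mul, hzero, mul_zero, sub_zero] at hsub
  refine Eq.trans ?_ (hsub.symm.trans ?_)
  · refine setIntegral_congr_fun hU.measurableSet fun x hx => ?_
    have hGx := hGpos x hx
    rw [gradient_rpow (hdG x hx) hGx.ne', aNorm_smul _ _ _ (by positivity), aInner_smul_left,
      aInner_smul_right]
    have hN0 : 0 ≤ aNorm A x (gradient G x) := Real.sqrt_nonneg _
    have hc0 : 0 < q * G x ^ (q - 1) := by positivity
    -- `(q G^{q-1})^{p-2} (q G^{q-1}) = q^{p-1} G^{(q-1)(p-1)}`, and `(q-1)(p-1) = -q`.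
    have hcoef : (q * G x ^ (q - 1)) ^ (p - 2) * (q * G x ^ (q - 1))
        = q ^ (p - 1) * G x ^ (-q) := by
      rw [← Real.rpow_add_one hc0.ne', Real.mul_rpow hq0.le (by positivity),
        ← Real.rpow_mul hGx.le]
      congr 2
      · ring
      · linear_combination hqp
    rw [Real.mul_rpow hc0.le hN0, ← hcoef]
    ring
  · refine setIntegral_congr_fun hU.measurableSet fun x hx => ?_
    have hGx := hGpos x hx
    rw [gradient_rpow_mul (hdG x hx) hGx.ne' (hψ1.differentiable one_ne_zero x),
      aInner_add_right, aInner_smul_right, aInner_smul_right, aInner_smul_right]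
    have hN0 : 0 ≤ aNorm A x (gradient G x) := Real.sqrt_nonneg _
    have hI0 : 0 ≤ aInner A x (gradient G x) (gradient G x) := by
      by_cases h : gradient G x = 0
      · simp [h, aInner]
      · exact (hA.posdef x (hUΩ hx) _ h).le
    -- At a critical point of `G` both sides vanish, whatever `0 ^ (p - 2)` is.
    have hpow : aNorm A x (gradient G x) ^ (p - 2) * aInner A x (gradient G x) (gradient G x)
        = aNorm A x (gradient G x) ^ p := by
      have hsq : aInner A x (gradient G x) (gradient G x) = aNorm A x (gradient G x) ^ 2 :=
        (Real.sq_sqrt hI0).symm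
      rw [hsq]
      rcases hN0.eq_or_lt with h | h
      · rw [← h, Real.zero_rpow hp0.ne']
        simp
      · rw [← Real.rpow_natCast, ← Real.rpow_add h]
        norm_num
    have hq1 : q ^ p = q ^ (p - 1) * q := by
      rw [← Real.rpow_add_one hq0.ne']
      ring_nf
    have hG2 : G x ^ (-q - 1) = (G x ^ p)⁻¹ * (G x ^ q) ^ (p - 1) := by
      rw [← Real.rpow_neg hGx.le, ← Real.rpow_mul hGx.le, ← Real.rpow_add hGx]
      congr 1
      linear_combination -hqp
    rw [Real.div_rpow hN0 hGx.le, ← hpow, hq1, hG2]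
    ring
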